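/- Let m be odd, * the involution x* = −x on A_m, ψ a non-trivial character of the additive group of k, and ψ̲ = ψ ∘ tr, a non-trivial character of the additive group of A_m. Let Q(t) = t* t, B_Q(t,s) = t* s + t s*, let S(a) = Σ_{u ∈ A_m} ψ̲(a·Q(u)) denote the Gauss sum, and set α(a) = S(a)/S(1) for a ∈ A_m^×. Let W be the ℂ-vector space of all complex-valued functions on A_m. Then there exists a group homomorphism ρ : SL_*(2,A_m) → GL(W) (the generalized Weil representation) such that for all f ∈ W, a ∈ A_m: (i) (ρ(h(t))f)(a) = α(t) f(a t) for t ∈ A_m^×; (ii) (ρ(u(b))f)(a) = ψ̲(b·Q(a)) f(a) for b ∈ A_m^s; (iii) (ρ(w)f)(a) = (α(−1)/S(1)) Σ_{c ∈ A_m} ψ̲(B_Q(a,c)) f(c). -/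

import Mathlib

open Polynomial

set_option synthInstance.maxHeartbeats 1000000

/-- The truncated polynomial algebra `A_m = k[x]/⟨x^m⟩`. -/
abbrev TruncPoly (k : Type*) [Field k] (m : ℕ) :=
  Polynomial k ⧸ Ideal.span {(Polynomial.X : Polynomial k) ^ m}

/-- The class of `x` in `A_m = k[x]/⟨x^m⟩`. -/
noncomputable def xbar (k : Type*) [Field k] (m : ℕ) : TruncPoly k m :=
  Ideal.Quotient.mk _ (Polynomial.X : Polynomial k)

/-- The set `SL_*(2,A)` for a commutative ring `A` equipped with an involution `σ`. -/
def SLstarSet {A : Type*} [CommRing A] (σ : A → A) : Set (Matrix (Fin 2) (Fin 2) A) :=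
  {g | g 0 0 * σ (g 0 1) = g 0 1 * σ (g 0 0) ∧
       g 1 0 * σ (g 1 1) = g 1 1 * σ (g 1 0) ∧
       σ (g 0 0) * g 1 0 = σ (g 1 0) * g 0 0 ∧
       σ (g 0 1) * g 1 1 = σ (g 1 1) * g 0 1 ∧
       g 0 0 * σ (g 1 1) - g 0 1 * σ (g 1 0) = 1 ∧
       σ (g 0 0) * g 1 1 - σ (g 1 0) * g 0 1 = 1}

/-- The Bruhat generator `h(t) = [[t, 0],[0, (t*)⁻¹]]`. -/
def hM {A : Type*} [CommRing A] (σ : A →* A) (t : Aˣ) : Matrix (Fin 2) (Fin 2) A :=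
  !![(t : A), 0; 0, ((Units.map σ t)⁻¹ : Aˣ)]

/-- The Bruhat generator `u(s) = [[1, s],[0, 1]]`. -/
def uM {A : Type*} [CommRing A] (s : A) : Matrix (Fin 2) (Fin 2) A :=
  !![1, s; 0, 1]

/-- The Bruhat generator `w = [[0, 1],[−1, 0]]`. -/
def wM (A : Type*) [CommRing A] : Matrix (Fin 2) (Fin 2) A :=
  !![0, 1; -1, 0]

/-- The Gauss sum `S_{ψ̲∘Q}(a) = Σ_{u ∈ A_m} ψ̲(a·Q(u))`, with `Q(u) = u* u` and
`ψ̲ = ψ ∘ tr`. -/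
noncomputable def gaussS {k : Type*} [Field k] {m : ℕ} [Fintype (TruncPoly k m)]
    (σ : TruncPoly k m →ₐ[k] TruncPoly k m) (tr : TruncPoly k m →ₗ[k] k)
    (ψ : AddChar k ℂ) (a : TruncPoly k m) : ℂ :=
  ∑ u : TruncPoly k m, ψ (tr (a * (σ u * u)))

/-!
The representation is given on the big Bruhat cell, where the entry `c` of `g = [[a, b], [c, d]]` is
a unit, by the kernel
`S(c) / S(1)² · φ (c⁻¹ (a Q(x) + d Q(y) - 2 x* y))`.
Composing two kernels and completing the square produces one more Gauss sum, so on the big cell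
multiplicativity amounts to `S(c) S(c') S(e) = S(c c' e) S(1)²`. This holds because `S(a)`, for `a`
a unit, depends only on the square class of `a` in the residue field, and `S(a)² = S(1)²` since
every element of a finite field is a sum of two squares. The complement of the big cell is a
subgroup of index at least `4`, so any three translates of the big cell intersect, and a function
multiplicative on the big cell extends to the whole group. The values at `h(t)` and `u(b)` are then
forced by those at `w`, `h(t) w` and `u(b) w`.

All this works over a finite local ring with `2` invertible, an involution acting trivially on the
residue field and an invariant primitive additive character `φ`.
-/

section PartialHom

variable {G M : Type*} [Group G] [Monoid M]

/-- A function `r` on a group that is multiplicative as long as the subgroup `B` is avoided.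
For `B` a Borel subgroup the complement of `B` is the big Bruhat cell. -/
structure IsMulHomOff (B : Subgroup G) (r : G → M) : Prop where
  map_mul : ∀ {g h : G}, g ∉ B → h ∉ B → g * h ∉ B → r (g * h) = r g * r h
  map_mul_map_inv : ∀ {g : G}, g ∉ B → r g * r g⁻¹ = 1

theorem exists_mul_notMem_of_four_le_card_quotient {B : Subgroup G}
    (hB : 4 ≤ ENat.card (G ⧸ B)) (a b c : G) :
    ∃ h, a * h ∉ B ∧ b * h ∉ B ∧ c * h ∉ B := by
  classical
  let cosets : Finset (G ⧸ B) := {↑a⁻¹, ↑b⁻¹, ↑c⁻¹}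
  obtain ⟨x, hx⟩ : ∃ x, x ∉ cosets := by
    by_contra! h
    rw [← Set.encard_univ, ← Set.eq_univ_of_forall (s := cosets) h,
      Set.encard_coe_eq_coe_finsetCard] at hB
    exact absurd Finset.card_le_three (not_le.mpr (by exact_mod_cast hB))
  obtain ⟨h, rfl⟩ := QuotientGroup.mk_surjective x
  simp only [cosets, Finset.mem_insert, Finset.mem_singleton, not_or, eq_comm (a := (h : G ⧸ B)),
    QuotientGroup.eq, inv_inv] at hx
  exact ⟨h, hx⟩

namespace IsMulHomOff

variable {B : Subgroup G} {r : G → M}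

theorem map_inv_mul_map (hr : IsMulHomOff B r) {g : G} (hg : g ∉ B) : r g⁻¹ * r g = 1 := by
  simpa only [inv_inv] using hr.map_mul_map_inv (mt inv_mem_iff.mp hg)

theorem eq_of_mul_map_eq (hr : IsMulHomOff B r) {h : G} (hh : h ∉ B) {x y : M}
    (hxy : x * r h = y * r h) : x = y := by
  have := congrArg (· * r h⁻¹) hxy
  simpa only [mul_assoc, hr.map_mul_map_inv hh, mul_one] using this

theorem map_mul_map_inv_mul_map (hr : IsMulHomOff B r) {g x h : G} (hx : x ∉ B)
    (hgx : g * x ∉ B) (hh : h ∉ B) (hgh : g * h ∉ B) (hxh : x⁻¹ * h ∉ B) :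
    r (g * x) * r x⁻¹ * r h = r (g * h) := by
  have hgh' : g * x * (x⁻¹ * h) = g * h := by group
  rw [mul_assoc, ← hr.map_mul (mt inv_mem_iff.mp hx) hh hxh, ← hr.map_mul hgx hxh (hgh' ▸ hgh),
    hgh']

theorem exists_forall_mul_map_eq (hr : IsMulHomOff B r) (hB : 4 ≤ ENat.card (G ⧸ B)) (g : G) :
    ∃ m : M, ∀ h ∉ B, g * h ∉ B → m * r h = r (g * h) := by
  obtain ⟨x, hx, hgx, -⟩ := exists_mul_notMem_of_four_le_card_quotient hB 1 g g
  rw [one_mul] at hx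
  refine ⟨r (g * x) * r x⁻¹, fun h hh hgh => ?_⟩
  by_cases hxh : x⁻¹ * h ∈ B
  · -- Pass through a third point `y` in general position with respect to both `x` and `h`.
    obtain ⟨y, hy, hgy, hxy⟩ := exists_mul_notMem_of_four_le_card_quotient hB 1 g x⁻¹
    rw [one_mul] at hy
    have hyh : y⁻¹ * h ∉ B := by
      rw [show y⁻¹ * h = (x⁻¹ * y)⁻¹ * (x⁻¹ * h) by group, B.mul_mem_cancel_right hxh, inv_mem_iff]
      exact hxy
    have hm : r (g * x) * r x⁻¹ = r (g * y) * r y⁻¹ := hr.eq_of_mul_map_eq hy <| by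
      rw [hr.map_mul_map_inv_mul_map hx hgx hy hgy hxy, mul_assoc, hr.map_inv_mul_map hy, mul_one]
    rw [hm, hr.map_mul_map_inv_mul_map hy hgy hh hgh hyh]
  · exact hr.map_mul_map_inv_mul_map hx hgx hh hgh hxh

theorem exists_monoidHom (hr : IsMulHomOff B r) (hB : 4 ≤ ENat.card (G ⧸ B)) :
    ∃ ρ : G →* M, ∀ g ∉ B, ρ g = r g := by
  choose m hm using hr.exists_forall_mul_map_eq hB
  have map_mul (g g' : G) : m (g * g') = m g * m g' := by
    obtain ⟨h, hh, hg'h, hgg'h⟩ := exists_mul_notMem_of_four_le_card_quotient hB 1 g' (g * g')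
    rw [one_mul] at hh
    refine hr.eq_of_mul_map_eq hh ?_
    rw [hm _ h hh hgg'h, mul_assoc (m g), hm g' h hh hg'h, hm g _ hg'h (by rwa [← mul_assoc]),
      mul_assoc]
  have map_one : m 1 = 1 := by
    obtain ⟨h, hh, -⟩ := exists_mul_notMem_of_four_le_card_quotient hB 1 1 1
    exact hr.eq_of_mul_map_eq (by rwa [one_mul] at hh) (by
      rw [hm 1 h (by rwa [one_mul] at hh) hh, one_mul, one_mul])
  refine ⟨⟨⟨m, map_one⟩, map_mul⟩, fun g hg => ?_⟩
  obtain ⟨h, hh, hgh, -⟩ := exists_mul_notMem_of_four_le_card_quotient hB 1 g g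
  rw [one_mul] at hh
  exact hr.eq_of_mul_map_eq hh ((hm g h hh hgh).trans (hr.map_mul hg hh hgh))

end IsMulHomOff

end PartialHom

section SLstar

open scoped Matrix

variable {A : Type*} [CommRing A] {σ : A →+* A}

theorem mem_SLstarSet_iff (hσ : Function.Involutive σ) {g : Matrix (Fin 2) (Fin 2) A} :
    g ∈ SLstarSet σ ↔ g * wM A * (g.map σ)ᵀ = wM A ∧ (g.map σ)ᵀ * wM A * g = wM A := by
  simp only [SLstarSet, Set.mem_ofPred_eq, wM, ← Matrix.ext_iff, Fin.forall_fin_two,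
    Matrix.mul_apply, Fin.sum_univ_two, Matrix.transpose_apply, Matrix.map_apply, Matrix.of_apply,
    Matrix.cons_val', Matrix.cons_val_zero, Matrix.cons_val_one, Matrix.cons_val_fin_one]
  constructor
  · rintro ⟨h1, h2, h3, h4, h5, h6⟩
    have h5' := congrArg σ h5
    have h6' := congrArg σ h6
    simp only [map_sub, map_mul, map_one, hσ _] at h5' h6'
    refine ⟨⟨⟨?_, ?_⟩, ?_, ?_⟩, ⟨?_, ?_⟩, ?_, ?_⟩
    · linear_combination h1
    · linear_combination h5
    · linear_combination -h5'
    · linear_combination h2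
    · linear_combination h3
    · linear_combination h6
    · linear_combination -h6'
    · linear_combination h4
  · rintro ⟨⟨⟨h1, h5⟩, -, h2⟩, ⟨h3, h6⟩, -, h4⟩
    refine ⟨?_, ?_, ?_, ?_, ?_, ?_⟩
    · linear_combination h1
    · linear_combination h2
    · linear_combination h3
    · linear_combination h4
    · linear_combination h5
    · linear_combination h6

theorem mul_mem_SLstarSet (hσ : Function.Involutive σ) {g g' : Matrix (Fin 2) (Fin 2) A}
    (hg : g ∈ SLstarSet σ) (hg' : g' ∈ SLstarSet σ) : g * g' ∈ SLstarSet σ := by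
  rw [mem_SLstarSet_iff hσ] at hg hg' ⊢
  rw [Matrix.map_mul, Matrix.transpose_mul]
  constructor
  · calc g * g' * wM A * ((g'.map σ)ᵀ * (g.map σ)ᵀ)
        = g * (g' * wM A * (g'.map σ)ᵀ) * (g.map σ)ᵀ := by simp only [mul_assoc]
      _ = wM A := by rw [hg'.1, hg.1]
  · calc (g'.map σ)ᵀ * (g.map σ)ᵀ * wM A * (g * g')
        = (g'.map σ)ᵀ * ((g.map σ)ᵀ * wM A * g) * g' := by simp only [mul_assoc]
      _ = wM A := by rw [hg.2, hg'.2]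

/-- The `σ`-adjugate `[[d*, -b*], [-c*, a*]]` of `[[a, b], [c, d]]`, the inverse of the matrix when
it lies in `SL_*(2, A)`. -/
def starAdjugate (σ : A →+* A) (g : Matrix (Fin 2) (Fin 2) A) : Matrix (Fin 2) (Fin 2) A :=
  !![σ (g 1 1), -σ (g 0 1); -σ (g 1 0), σ (g 0 0)]

theorem starAdjugate_mem_SLstarSet (hσ : Function.Involutive σ) {g : Matrix (Fin 2) (Fin 2) A}
    (hg : g ∈ SLstarSet σ) : starAdjugate σ g ∈ SLstarSet σ := by
  obtain ⟨h1, h2, h3, h4, h5, h6⟩ := hg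
  have h5' := congrArg σ h5
  have h6' := congrArg σ h6
  simp only [map_sub, map_mul, map_one, hσ _] at h5' h6'
  simp only [SLstarSet, starAdjugate, Set.mem_ofPred_eq, Matrix.of_apply, Matrix.cons_val',
    Matrix.cons_val_zero, Matrix.cons_val_one, Matrix.cons_val_fin_one, map_neg, hσ _]
  refine ⟨?_, ?_, ?_, ?_, ?_, ?_⟩
  · linear_combination h4
  · linear_combination h3
  · linear_combination h2
  · linear_combination h1
  · linear_combination h6'
  · linear_combination h5'

theorem starAdjugate_mul_self (hσ : Function.Involutive σ) {g : Matrix (Fin 2) (Fin 2) A}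
    (hg : g ∈ SLstarSet σ) : starAdjugate σ g * g = 1 := by
  obtain ⟨-, -, h3, h4, -, h6⟩ := hg
  have h6' := congrArg σ h6
  simp only [map_sub, map_mul, map_one, hσ _] at h6'
  simp only [starAdjugate, ← Matrix.ext_iff, Fin.forall_fin_two, Matrix.mul_apply,
    Fin.sum_univ_two, Matrix.of_apply, Matrix.cons_val', Matrix.cons_val_zero, Matrix.cons_val_one,
    Matrix.cons_val_fin_one, Matrix.one_apply_eq, ne_eq, zero_ne_one, one_ne_zero,
    not_false_eq_true, Matrix.one_apply_ne]
  refine ⟨⟨?_, ?_⟩, ?_, ?_⟩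
  · linear_combination h6'
  · linear_combination -h4
  · linear_combination h3
  · linear_combination h6

theorem hM_mem_SLstarSet (hσ : Function.Involutive σ) (t : Aˣ) :
    hM (σ : A →* A) t ∈ SLstarSet σ := by
  simp [SLstarSet, hM, hσ _, ← map_mul]

theorem uM_mem_SLstarSet {b : A} (hb : σ b = b) : uM b ∈ SLstarSet σ := by
  simp [SLstarSet, uM, hb]

theorem wM_mem_SLstarSet (σ : A →+* A) : wM A ∈ SLstarSet σ := by
  simp [SLstarSet, wM]

/-- `SL_*(2, A)` as a submonoid of the matrix monoid. The involutivity of `σ` is part of the data so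
that the group structure can be an instance. -/
def SLstar (σ : A →+* A) (hσ : Function.Involutive σ) :
    Submonoid (Matrix (Fin 2) (Fin 2) A) where
  carrier := SLstarSet σ
  mul_mem' := mul_mem_SLstarSet hσ
  one_mem' := by simp [SLstarSet]

namespace SLstar

variable {hσ : Function.Involutive σ}

instance : Group (SLstar σ hσ) where
  inv g := ⟨starAdjugate σ g, starAdjugate_mem_SLstarSet hσ g.2⟩
  inv_mul_cancel g := Subtype.ext (starAdjugate_mul_self hσ g.2)

theorem coe_inv (g : SLstar σ hσ) :
    ((g⁻¹ : SLstar σ hσ) : Matrix (Fin 2) (Fin 2) A) = starAdjugate σ g :=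
  rfl

theorem coe_inv_apply_one_zero (g : SLstar σ hσ) :
    (g⁻¹ : SLstar σ hσ).1 1 0 = -σ (g.1 1 0) := by
  simp [coe_inv, starAdjugate]

theorem coe_mul_apply_one_zero (g g' : SLstar σ hσ) :
    (g * g').1 1 0 = g.1 1 0 * g'.1 0 0 + g.1 1 1 * g'.1 1 0 := by
  rw [Submonoid.coe_mul, Matrix.mul_apply, Fin.sum_univ_two]

variable [IsLocalRing A]

/-- The preimage in `SL_*(2, A)` of the upper triangular matrices over the residue field. -/
def borel (σ : A →+* A) (hσ : Function.Involutive σ) : Subgroup (SLstar σ hσ) where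
  carrier := {g | g.1 1 0 ∈ IsLocalRing.maximalIdeal A}
  one_mem' := by simp
  mul_mem' {g g'} hg hg' := by
    rw [Set.mem_ofPred_eq, coe_mul_apply_one_zero]
    exact add_mem (Ideal.mul_mem_right _ _ hg) (Ideal.mul_mem_left _ _ hg')
  inv_mem' {g} hg := by
    rw [Set.mem_ofPred_eq, coe_inv_apply_one_zero, neg_mem_iff, IsLocalRing.mem_maximalIdeal,
      mem_nonunits_iff]
    intro h
    exact hg (by simpa only [hσ _] using h.map σ)

theorem notMem_borel_iff {g : SLstar σ hσ} : g ∉ borel σ hσ ↔ IsUnit (g.1 1 0) :=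
  IsLocalRing.notMem_maximalIdeal

-- The four cosets are the points `∞`, `0`, `1`, `-1` of the projective line over the residue field.
theorem four_le_card_quotient_borel (h2 : IsUnit (2 : A)) :
    4 ≤ ENat.card (SLstar σ hσ ⧸ borel σ hσ) := by
  let w : SLstar σ hσ := ⟨wM A, wM_mem_SLstarSet σ⟩
  let u (b : A) (hb : σ b = b) : SLstar σ hσ := ⟨uM b, uM_mem_SLstarSet hb⟩
  let point : Fin 4 → SLstar σ hσ :=
    ![1, w, u 1 (map_one σ) * w, u (-1) (by rw [map_neg, map_one]) * w]
  have isUnit_of_lt (i j : Fin 4) (hij : i < j) : IsUnit (((point i)⁻¹ * point j).1 1 0) := by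
    fin_cases i <;> fin_cases j <;> first | exact absurd hij (by decide) | skip
    all_goals
      rw [coe_mul_apply_one_zero, coe_inv]
      simp [point, w, u, starAdjugate, wM, uM, one_add_one_eq_two, h2]
  have mk_injective : Function.Injective fun i => (point i : SLstar σ hσ ⧸ borel σ hσ) := by
    have mk_ne_of_lt {i j : Fin 4} (hij : i < j) :
        (point i : SLstar σ hσ ⧸ borel σ hσ) ≠ point j := fun h =>
      notMem_borel_iff.mpr (isUnit_of_lt i j hij) (QuotientGroup.eq.mp h)
    rw [Function.injective_iff_pairwise_ne]
    intro i j hij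
    exact hij.lt_or_gt.elim mk_ne_of_lt fun hji => (mk_ne_of_lt hji).symm
  simpa using ENat.card_le_card_of_injective mk_injective

end SLstar

end SLstar

section FiniteField

variable {F : Type*} [Field F] [Finite F]

theorem exists_sq_add_sq_eq_of_finite (a : F) : ∃ u v : F, u ^ 2 + v ^ 2 = a := by
  have := Fintype.ofFinite F
  by_cases hF : ringChar F = 2
  · obtain ⟨u, rfl⟩ := FiniteField.isSquare_of_char_two hF a
    exact ⟨u, 0, by ring⟩
  · obtain ⟨u, v, huv⟩ := FiniteField.exists_root_sum_quadratic (f := (X ^ 2 : F[X]))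
      (g := X ^ 2 - C a) (degree_X_pow 2) (degree_X_pow_sub_C two_pos a)
      (FiniteField.odd_card_of_char_ne_two hF)
    simp only [eval_pow, eval_X, eval_sub, eval_C] at huv
    exact ⟨u, v, by linear_combination huv⟩

theorem isSquare_mul_of_not_isSquare {a b : F} (ha : ¬IsSquare a) (hb : ¬IsSquare b) :
    IsSquare (a * b) := by
  classical
  have := Fintype.ofFinite F
  have hab : a * b ≠ 0 :=
    mul_ne_zero (fun h => ha (h ▸ IsSquare.zero)) fun h => hb (h ▸ IsSquare.zero)
  rw [← quadraticChar_one_iff_isSquare hab, map_mul,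
    quadraticChar_neg_one_iff_not_isSquare.mpr ha, quadraticChar_neg_one_iff_not_isSquare.mpr hb,
    neg_one_mul, neg_neg]

end FiniteField

section Symmetric

variable {A : Type*} [CommRing A] {σ : A →+* A}

theorem exists_symm_add_sub_map (hσ : Function.Involutive σ) (h2 : IsUnit (2 : A)) (a : A) :
    ∃ b w : A, σ b = b ∧ a = b + (w - σ w) := by
  obtain ⟨t, ht⟩ := h2.exists_right_inv
  have map_t : σ t = t := h2.mul_left_cancel <| by
    rw [ht, ← map_ofNat σ 2, ← map_mul, ht, map_one]
  refine ⟨t * (a + σ a), t * a, ?_, ?_⟩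
  · rw [map_mul, map_add, hσ, map_t, add_comm]
  · rw [map_mul, map_t]
    linear_combination -a * ht

/- Squaring is injective on the finite set of symmetric elements congruent to `1`, as
`x² = y²` forces `x = y` once `x + y ≡ 2` is a unit; hence it is surjective. -/
theorem exists_symm_sq_eq_of_residue_eq_one [IsLocalRing A] [Finite A] (h2 : IsUnit (2 : A))
    {e : A} (he : σ e = e) (he1 : IsLocalRing.residue A e = 1) : ∃ f : A, σ f = f ∧ f ^ 2 = e := by
  let T : Set A := {f | σ f = f ∧ IsLocalRing.residue A f = 1}
  have sq_mapsTo : Set.MapsTo (· ^ 2) T T := fun f hf => by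
    simp only [T, Set.mem_ofPred_eq, map_pow, hf.1, hf.2, one_pow, and_self]
  have sq_injOn : Set.InjOn (· ^ 2) T := by
    intro x hx y hy hxy
    have isUnit_add : IsUnit (x + y) := by
      rw [← IsLocalRing.residue_ne_zero_iff_isUnit, map_add, hx.2, hy.2, one_add_one_eq_two,
        ← map_ofNat (IsLocalRing.residue A) 2, IsLocalRing.residue_ne_zero_iff_isUnit]
      exact h2
    exact isUnit_add.mul_left_cancel (by linear_combination hxy)
  obtain ⟨f, hfe⟩ := Finite.injective_iff_surjective.mp (sq_mapsTo.restrict_inj.mpr sq_injOn)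
    ⟨e, he, he1⟩
  exact ⟨f, f.2.1, congrArg Subtype.val hfe⟩

end Symmetric

section GaussSum

variable {A K : Type*} [CommRing A] [Field K] {σ : A →+* A} {φ : AddChar A K}

theorem addChar_eq_of_sub_eq_sub_map (hφσ : ∀ a, φ (σ a) = φ a) {a b : A} (w : A)
    (h : a - b = w - σ w) : φ a = φ b := by
  refine (AddChar.val_isUnit φ w).mul_right_cancel ?_
  rw [← AddChar.map_add_eq_mul, show a + w = b + w + (w - σ w) by rw [← h]; ring,
    AddChar.map_add_eq_mul, AddChar.map_sub_eq_div, hφσ,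
    div_self (AddChar.val_isUnit φ w).ne_zero, mul_one, AddChar.map_add_eq_mul]

variable [Fintype A]

/- If `p = char K` divided `#A`, some `a ≠ 0` would satisfy `p a = 0`, so that `φ (a x)` would be a
`p`-th root of unity, hence `1`, for every `x`. -/
theorem card_ne_zero_of_isPrimitive [Nontrivial A] (hφ : φ.IsPrimitive) :
    (Fintype.card A : K) ≠ 0 := by
  intro card_eq_zero
  obtain ⟨p, hp⟩ := CharP.exists K
  have p_dvd_card := (CharP.cast_eq_zero_iff K p _).mp card_eq_zero
  have : Fact p.Prime := ⟨(CharP.char_is_prime_or_zero K p).resolve_right fun h =>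
    Fintype.card_ne_zero (zero_dvd_iff.mp (h ▸ p_dvd_card))⟩
  obtain ⟨a, order_a⟩ := exists_prime_addOrderOf_dvd_card p p_dvd_card
  have nsmul_a : p • a = 0 := order_a ▸ addOrderOf_nsmul_eq_zero a
  have a_ne_zero : a ≠ 0 := by
    rintro rfl
    exact (Fact.out : p.Prime).ne_one (by rw [← order_a, addOrderOf_zero])
  refine hφ a_ne_zero (DFunLike.ext _ _ fun x => frobenius_inj K p ?_)
  rw [frobenius_def, AddChar.mulShift_apply, ← AddChar.map_nsmul_eq_pow, ← smul_mul_assoc,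
    nsmul_a, zero_mul, AddChar.map_zero_eq_one, AddChar.one_apply, map_one]

theorem sum_addChar_neg_two_mul [DecidableEq A] (hφ : φ.IsPrimitive) (h2 : IsUnit (2 : A))
    (b : A) : ∑ y, φ (-(2 * (b * y))) = if b = 0 then (Fintype.card A : K) else 0 := by
  have neg_two_mul_eq_zero : -2 * b = 0 ↔ b = 0 := h2.neg.mul_right_eq_zero
  have sum_eq := AddChar.sum_mulShift (-2 * b) hφ
  simp only [neg_two_mul_eq_zero] at sum_eq
  rw [Nat.cast_ite, Nat.cast_zero] at sum_eq
  rw [← sum_eq]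
  exact Finset.sum_congr rfl fun y _ => by ring_nf

/-- The Gauss sum `S(a) = ∑ u, φ (a * Q u)` of the norm form `Q u = σ u * u`, over an arbitrary
finite commutative ring with endomorphism `σ`. -/
noncomputable def normGaussSum (σ : A →+* A) (φ : AddChar A K) (a : A) : K :=
  ∑ u, φ (a * (σ u * u))

theorem normGaussSum_mul_norm (a : A) {t : A} (ht : IsUnit t) :
    normGaussSum σ φ (a * (σ t * t)) = normGaussSum σ φ a :=
  Fintype.sum_equiv (Units.mulLeft ht.unit) _ _ fun u => by
    simp only [Units.mulLeft_apply, IsUnit.unit_spec, map_mul]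
    ring_nf

theorem normGaussSum_add_sub_map (hσ : Function.Involutive σ) (hφσ : ∀ a, φ (σ a) = φ a)
    (b w : A) : normGaussSum σ φ (b + (w - σ w)) = normGaussSum σ φ b :=
  Finset.sum_congr rfl fun u _ => addChar_eq_of_sub_eq_sub_map hφσ (w * (σ u * u)) <| by
    simp only [map_mul, hσ u]
    ring

theorem sum_addChar_quadratic (hσ : Function.Involutive σ) (hφσ : ∀ a, φ (σ a) = φ a)
    {e e' : A} (he : σ e = e) (hee' : e * e' = 1) (l : A) :
    ∑ y, φ (e * (σ y * y) - 2 * (σ l * y)) = φ (-(e' * (σ l * l))) * normGaussSum σ φ e := by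
  have he' : σ e' = e' := (IsUnit.of_mul_eq_one _ hee').mul_left_cancel <| by
    rw [hee', ← he, ← map_mul, hee', map_one]
  rw [normGaussSum, Finset.mul_sum]
  refine Fintype.sum_equiv (Equiv.subRight (e' * l)) _ _ fun y => ?_
  rw [← AddChar.map_add_eq_mul]
  refine addChar_eq_of_sub_eq_sub_map hφσ (σ y * l) ?_
  simp only [Equiv.subRight_apply, map_sub, map_mul, hσ y, he']
  linear_combination (σ y * l + y * σ l - e' * σ l * l) * hee'

theorem normGaussSum_one_mul_neg_one (hσ : Function.Involutive σ) (hφσ : ∀ a, φ (σ a) = φ a)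
    (hφ : φ.IsPrimitive) (h2 : IsUnit (2 : A)) :
    normGaussSum σ φ 1 * normGaussSum σ φ (-1) = Fintype.card A := by
  classical
  calc normGaussSum σ φ 1 * normGaussSum σ φ (-1)
      = ∑ v, ∑ u, φ (1 * (σ u * u)) * φ (-1 * (σ v * v)) := by
        rw [normGaussSum, normGaussSum, Finset.sum_mul_sum, Finset.sum_comm]
    _ = ∑ v, ∑ s, φ (σ s * s) * φ (-(2 * (-σ s * v))) := by
        refine Finset.sum_congr rfl fun v _ => Fintype.sum_equiv (Equiv.subRight v) _ _ fun u => ?_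
        rw [← AddChar.map_add_eq_mul, ← AddChar.map_add_eq_mul]
        refine addChar_eq_of_sub_eq_sub_map hφσ (σ v * u) ?_
        simp only [Equiv.subRight_apply, map_sub, map_mul, hσ v]
        ring
    _ = ∑ s, φ (σ s * s) * if s = 0 then (Fintype.card A : K) else 0 := by
        rw [Finset.sum_comm]
        simp only [← Finset.mul_sum, sum_addChar_neg_two_mul hφ h2, neg_eq_zero,
          map_eq_zero_iff σ hσ.injective]
    _ = Fintype.card A := by simp

theorem normGaussSum_one_ne_zero [Nontrivial A] (hσ : Function.Involutive σ)
    (hφσ : ∀ a, φ (σ a) = φ a) (hφ : φ.IsPrimitive) (h2 : IsUnit (2 : A)) :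
    normGaussSum σ φ 1 ≠ 0 := by
  refine left_ne_zero_of_mul (b := normGaussSum σ φ (-1)) ?_
  rw [normGaussSum_one_mul_neg_one hσ hφσ hφ h2]
  exact card_ne_zero_of_isPrimitive hφ

-- `(Q r + Q s) (Q u + Q v)` is again a sum of two norms, by the four-square-type identity.
theorem normGaussSum_mul_add_norms_sq (hσ : Function.Involutive σ) (a : A) {r s : A}
    (hrs : IsUnit (σ r * r + σ s * s)) :
    normGaussSum σ φ (a * (σ r * r + σ s * s)) ^ 2 = normGaussSum σ φ a ^ 2 := by
  have sq_eq_sum (c : A) :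
      normGaussSum σ φ c ^ 2 = ∑ p : A × A, φ (c * (σ p.1 * p.1 + σ p.2 * p.2)) := by
    rw [sq, normGaussSum, Finset.sum_mul_sum, Fintype.sum_prod_type]
    simp only [mul_add, AddChar.map_add_eq_mul]
  let rotate (p : A × A) : A × A := (r * p.1 - σ s * p.2, s * p.1 + σ r * p.2)
  have rotate_injective : Function.Injective rotate := fun p q hpq => by
    obtain ⟨h1, h2⟩ := Prod.ext_iff.mp hpq
    simp only [rotate] at h1 h2
    ext
    · exact hrs.mul_left_cancel (by linear_combination σ r * h1 + σ s * h2)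
    · exact hrs.mul_left_cancel (by linear_combination r * h2 - s * h1)
  rw [sq_eq_sum, sq_eq_sum, ← (Finite.injective_iff_bijective.mp rotate_injective).sum_comp
    fun p => φ (a * (σ p.1 * p.1 + σ p.2 * p.2))]
  refine Finset.sum_congr rfl fun p _ => ?_
  simp only [rotate, map_sub, map_add, map_mul, hσ _]
  ring_nf

section Local

variable [IsLocalRing A]

theorem normGaussSum_eq_of_residue_eq_mul_sq (hσ : Function.Involutive σ)
    (hσres : ∀ a, IsLocalRing.residue A (σ a) = IsLocalRing.residue A a)
    (hφσ : ∀ a, φ (σ a) = φ a) (h2 : IsUnit (2 : A)) {a b : A} (ha : IsUnit a)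
    {x : IsLocalRing.ResidueField A}
    (h : IsLocalRing.residue A a = IsLocalRing.residue A b * x ^ 2) :
    normGaussSum σ φ a = normGaussSum σ φ b := by
  obtain ⟨a, v, ha_symm, rfl⟩ := exists_symm_add_sub_map hσ h2 a
  obtain ⟨b, w, hb_symm, rfl⟩ := exists_symm_add_sub_map hσ h2 b
  rw [normGaussSum_add_sub_map hσ hφσ, normGaussSum_add_sub_map hσ hφσ]
  rw [← IsLocalRing.residue_ne_zero_iff_isUnit] at ha
  simp only [map_add, map_sub, hσres, sub_self, add_zero] at h ha
  obtain ⟨t, rfl⟩ := IsLocalRing.residue_surjective x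
  have residue_bt : IsLocalRing.residue A (b * (σ t * t)) = IsLocalRing.residue A a := by
    rw [map_mul, map_mul, hσres, h, sq]
  have isUnit_bt : IsUnit (b * (σ t * t)) := by
    rwa [← IsLocalRing.residue_ne_zero_iff_isUnit, residue_bt]
  have map_bt : σ (b * (σ t * t)) = b * (σ t * t) := by
    rw [map_mul, map_mul, hb_symm, hσ, mul_comm t]
  obtain ⟨c, hc⟩ := isUnit_bt.exists_right_inv
  have map_c : σ c = c := isUnit_bt.mul_left_cancel <| by
    rw [hc, ← map_bt, ← map_mul, hc, map_one]
  obtain ⟨f, map_f, hf⟩ := exists_symm_sq_eq_of_residue_eq_one (σ := σ) (e := a * c) h2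
    (by rw [map_mul, ha_symm, map_c])
    (by rw [map_mul, ← residue_bt, ← map_mul, hc, map_one])
  have isUnit_a : IsUnit a := (IsLocalRing.residue_ne_zero_iff_isUnit a).mp ha
  have isUnit_f : IsUnit f := by
    rw [← isUnit_pow_iff two_ne_zero, hf]
    exact isUnit_a.mul (IsUnit.of_mul_eq_one_right _ hc)
  have a_eq : a = b * (σ (t * f) * (t * f)) := by
    rw [map_mul, map_f]
    linear_combination -a * hc - b * σ t * t * hf
  rw [a_eq, normGaussSum_mul_norm b ((isUnit_of_mul_isUnit_right
    (isUnit_of_mul_isUnit_right isUnit_bt)).mul isUnit_f)]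

theorem normGaussSum_sq (hσ : Function.Involutive σ)
    (hσres : ∀ a, IsLocalRing.residue A (σ a) = IsLocalRing.residue A a)
    (hφσ : ∀ a, φ (σ a) = φ a) (h2 : IsUnit (2 : A)) {a : A} (ha : IsUnit a) :
    normGaussSum σ φ a ^ 2 = normGaussSum σ φ 1 ^ 2 := by
  have : Finite (IsLocalRing.ResidueField A) :=
    Finite.of_surjective _ IsLocalRing.residue_surjective
  obtain ⟨x, y, hxy⟩ := exists_sq_add_sq_eq_of_finite (IsLocalRing.residue A a)
  obtain ⟨r, rfl⟩ := IsLocalRing.residue_surjective x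
  obtain ⟨s, rfl⟩ := IsLocalRing.residue_surjective y
  have residue_norms : IsLocalRing.residue A (σ r * r + σ s * s) = IsLocalRing.residue A a := by
    rw [← hxy, map_add, map_mul, map_mul, hσres, hσres, sq, sq]
  have isUnit_norms : IsUnit (σ r * r + σ s * s) := by
    rwa [← IsLocalRing.residue_ne_zero_iff_isUnit, residue_norms,
      IsLocalRing.residue_ne_zero_iff_isUnit]
  rw [normGaussSum_eq_of_residue_eq_mul_sq hσ hσres hφσ h2 ha (b := σ r * r + σ s * s) (x := 1)
    (by rw [residue_norms, one_pow, mul_one]), ← normGaussSum_mul_add_norms_sq hσ 1 isUnit_norms,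
    one_mul]

theorem normGaussSum_mul_mul_one (hσ : Function.Involutive σ)
    (hσres : ∀ a, IsLocalRing.residue A (σ a) = IsLocalRing.residue A a)
    (hφσ : ∀ a, φ (σ a) = φ a) (h2 : IsUnit (2 : A)) {a b : A} (ha : IsUnit a) (hb : IsUnit b) :
    normGaussSum σ φ (a * b) * normGaussSum σ φ 1 = normGaussSum σ φ a * normGaussSum σ φ b := by
  have : Finite (IsLocalRing.ResidueField A) :=
    Finite.of_surjective _ IsLocalRing.residue_surjective
  have eq_of_residue {c d : A} (hc : IsUnit c) (x : IsLocalRing.ResidueField A) :=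
    normGaussSum_eq_of_residue_eq_mul_sq hσ hσres hφσ h2 hc (b := d) (x := x)
  by_cases ha_sq : IsSquare (IsLocalRing.residue A a)
  · obtain ⟨x, hx⟩ := ha_sq
    rw [eq_of_residue ha x (d := 1) (by rw [hx, map_one]; ring),
      eq_of_residue (ha.mul hb) x (d := b) (by rw [map_mul, hx]; ring), mul_comm]
  by_cases hb_sq : IsSquare (IsLocalRing.residue A b)
  · obtain ⟨x, hx⟩ := hb_sq
    rw [eq_of_residue hb x (d := 1) (by rw [hx, map_one]; ring),
      eq_of_residue (ha.mul hb) x (d := a) (by rw [map_mul, hx]; ring)]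
  obtain ⟨x, hx⟩ := isSquare_mul_of_not_isSquare ha_sq hb_sq
  have residue_b_ne_zero := (IsLocalRing.residue_ne_zero_iff_isUnit b).mpr hb
  rw [eq_of_residue (ha.mul hb) x (d := 1) (by rw [map_mul, hx, map_one]; ring),
    eq_of_residue ha (x / IsLocalRing.residue A b) (d := b)
      (by field_simp; linear_combination hx),
    ← sq, ← sq, normGaussSum_sq hσ hσres hφσ h2 hb]

theorem normGaussSum_mul_neg_map (hσ : Function.Involutive σ)
    (hσres : ∀ a, IsLocalRing.residue A (σ a) = IsLocalRing.residue A a)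
    (hφσ : ∀ a, φ (σ a) = φ a) (hφ : φ.IsPrimitive) (h2 : IsUnit (2 : A)) {c : A}
    (hc : IsUnit c) :
    normGaussSum σ φ c * normGaussSum σ φ (-σ c) = Fintype.card A := by
  rw [← normGaussSum_mul_mul_one hσ hσres hφσ h2 hc (hc.map σ).neg,
    show c * -σ c = -1 * (σ c * c) by ring, normGaussSum_mul_norm _ hc, mul_comm,
    normGaussSum_one_mul_neg_one hσ hφσ hφ h2]

theorem normGaussSum_one_pow_four (hσ : Function.Involutive σ)
    (hσres : ∀ a, IsLocalRing.residue A (σ a) = IsLocalRing.residue A a)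
    (hφσ : ∀ a, φ (σ a) = φ a) (hφ : φ.IsPrimitive) (h2 : IsUnit (2 : A)) :
    normGaussSum σ φ 1 ^ 4 = (Fintype.card A : K) ^ 2 := by
  rw [← normGaussSum_one_mul_neg_one hσ hφσ hφ h2, mul_pow,
    normGaussSum_sq hσ hσres hφσ h2 isUnit_one.neg]
  ring

end Local

end GaussSum

section BigCell

variable {A : Type*} [CommRing A] {σ : A →+* A} {g g' : Matrix (Fin 2) (Fin 2) A} {i i' j : A}

theorem map_inv_mul_apply_one_one (hg : g ∈ SLstarSet σ) (hi : g 1 0 * i = 1) :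
    σ (i * g 1 1) = i * g 1 1 := by
  obtain ⟨-, hcd, -, -, -, -⟩ := hg
  have hσi : σ (g 1 0) * σ i = 1 := by rw [← map_mul, hi, map_one]
  rw [map_mul]
  linear_combination i * σ i * hcd - σ i * σ (g 1 1) * hi + i * g 1 1 * hσi

theorem map_inv_mul_apply_zero_zero (hg : g ∈ SLstarSet σ) (hi : g 1 0 * i = 1) :
    σ (i * g 0 0) = i * g 0 0 := by
  obtain ⟨-, -, hac, -, -, -⟩ := hg
  have hσi : σ (g 1 0) * σ i = 1 := by rw [← map_mul, hi, map_one]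
  rw [map_mul]
  linear_combination i * σ i * hac - σ i * σ (g 0 0) * hi + i * g 0 0 * hσi

theorem inv_mul_apply_one_one_mul_apply_zero_zero (hg : g ∈ SLstarSet σ) (hi : g 1 0 * i = 1) :
    i * g 1 1 * g 0 0 = g 0 1 + σ i := by
  have hσi : σ (g 1 0) * σ i = 1 := by rw [← map_mul, hi, map_one]
  rw [← map_inv_mul_apply_one_one hg hi, map_mul]
  obtain ⟨-, -, -, -, hdet, -⟩ := hg
  linear_combination σ i * hdet + g 0 1 * hσi

theorem inv_mul_add_inv_mul_eq (hi : g 1 0 * i = 1) (hi' : g' 1 0 * i' = 1) :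
    i * g 1 1 + i' * g' 0 0 = (g * g') 1 0 * (i * i') := by
  simp only [Matrix.mul_apply, Fin.sum_univ_two]
  linear_combination -i' * g' 0 0 * hi - i * g 1 1 * hi'

theorem inv_mul_add_inv_mul_mul_eq_one (hi : g 1 0 * i = 1) (hi' : g' 1 0 * i' = 1)
    (hj : (g * g') 1 0 * j = 1) :
    (i * g 1 1 + i' * g' 0 0) * (j * (g 1 0 * g' 1 0)) = 1 := by
  rw [inv_mul_add_inv_mul_eq hi hi']
  linear_combination g 1 0 * i * (g' 1 0 * i') * hj + g' 1 0 * i' * hi + hi'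

theorem map_inv_mul_add_inv_mul (hg : g ∈ SLstarSet σ) (hg' : g' ∈ SLstarSet σ)
    (hi : g 1 0 * i = 1) (hi' : g' 1 0 * i' = 1) :
    σ (i * g 1 1 + i' * g' 0 0) = i * g 1 1 + i' * g' 0 0 := by
  rw [map_add, map_inv_mul_apply_one_one hg hi, map_inv_mul_apply_zero_zero hg' hi']

theorem inv_mul_mul_apply_zero_zero (hg : g ∈ SLstarSet σ) (hi : g 1 0 * i = 1)
    (hj : (g * g') 1 0 * j = 1) :
    j * (g * g') 0 0 = i * g 0 0 - j * (g 1 0 * g' 1 0) * (i * σ i) := by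
  have apply_eq : (g * g') 0 0 = (g * g') 1 0 * (i * g 0 0) - g' 1 0 * σ i := by
    simp only [Matrix.mul_apply, Fin.sum_univ_two]
    linear_combination -g' 1 0 * inv_mul_apply_one_one_mul_apply_zero_zero hg hi -
      g 0 0 * g' 0 0 * hi
  rw [apply_eq]
  linear_combination i * g 0 0 * hj + j * g' 1 0 * σ i * hi

theorem inv_mul_mul_apply_one_one (hg' : g' ∈ SLstarSet σ) (hi' : g' 1 0 * i' = 1)
    (hj : (g * g') 1 0 * j = 1) :
    j * (g * g') 1 1 = i' * g' 1 1 - j * (g 1 0 * g' 1 0) * (i' * σ i') := by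
  have apply_eq : (g * g') 1 1 = (g * g') 1 0 * (i' * g' 1 1) - g 1 0 * σ i' := by
    simp only [Matrix.mul_apply, Fin.sum_univ_two]
    linear_combination -g 1 0 * inv_mul_apply_one_one_mul_apply_zero_zero hg' hi' -
      g 1 1 * g' 1 1 * hi'
  rw [apply_eq]
  linear_combination i' * g' 1 1 * hj + j * g 1 0 * σ i' * hi'

end BigCell

section WeilKernel

open scoped Ring

theorem ringInverse_eq_of_mul_eq_one {M₀ : Type*} [CommMonoidWithZero M₀] {a b : M₀}
    (h : a * b = 1) : a⁻¹ʳ = b :=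
  Ring.inverse_unit (Units.mkOfMulEqOne a b h)

variable {A K : Type*} [CommRing A] [Field K] {σ : A →+* A} {φ : AddChar A K}
  {g g' : Matrix (Fin 2) (Fin 2) A}

theorem addChar_weilPhase_mul (hσ : Function.Involutive σ) (hφσ : ∀ a, φ (σ a) = φ a)
    (hg : g ∈ SLstarSet σ) (hg' : g' ∈ SLstarSet σ) {i i' j : A} (hi : g 1 0 * i = 1)
    (hi' : g' 1 0 * i' = 1) (hj : (g * g') 1 0 * j = 1) (x z : A) :
    φ (j * ((g * g') 0 0 * (σ x * x) + (g * g') 1 1 * (σ z * z) - 2 * (σ x * z))) =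
      φ (i * g 0 0 * (σ x * x) + i' * g' 1 1 * (σ z * z)) *
        φ (-(j * (g 1 0 * g' 1 0) * (σ (σ i * x + i' * z) * (σ i * x + i' * z)))) := by
  have j_eq : j * (g 1 0 * g' 1 0) * (i * i') = j := by
    linear_combination j * g' 1 0 * i' * hi + j * hi'
  have ee' := inv_mul_add_inv_mul_mul_eq_one hi hi' hj
  have e'_symm : σ (j * (g 1 0 * g' 1 0)) = j * (g 1 0 * g' 1 0) :=
    (IsUnit.of_mul_eq_one _ ee').mul_left_cancel <| by
      rw [ee', ← map_inv_mul_add_inv_mul hg hg' hi hi', ← map_mul, ee', map_one]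
  have σj_eq : j * (g 1 0 * g' 1 0) * (σ i * σ i') = σ j := by
    rw [← e'_symm, ← map_mul, ← map_mul, j_eq]
  rw [← AddChar.map_add_eq_mul]
  refine addChar_eq_of_sub_eq_sub_map hφσ (-(j * (σ x * z))) ?_
  simp only [map_add, map_mul σ _ x, map_mul σ _ z, map_mul σ j, map_neg, hσ _]
  linear_combination σ x * x * inv_mul_mul_apply_zero_zero hg hi hj +
    σ z * z * inv_mul_mul_apply_one_one hg' hi' hj + σ x * z * j_eq + x * σ z * σj_eq

variable [Fintype A]

/-- The integral kernel of the Weil representation at an element `g = [[a, b], [c, d]]` of the big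
cell. For `c` not a unit, where `c⁻¹ʳ = 0`, the value is meaningless. -/
noncomputable def weilKernel (σ : A →+* A) (φ : AddChar A K) (g : Matrix (Fin 2) (Fin 2) A) :
    Matrix A A K := fun x y =>
  normGaussSum σ φ (g 1 0) / normGaussSum σ φ 1 ^ 2 *
    φ ((g 1 0)⁻¹ʳ * (g 0 0 * (σ x * x) + g 1 1 * (σ y * y) - 2 * (σ x * y)))

theorem weilKernel_mul_apply (hσ : Function.Involutive σ) (hφσ : ∀ a, φ (σ a) = φ a)
    (g g' : Matrix (Fin 2) (Fin 2) A) (x z : A) :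
    (weilKernel σ φ g * weilKernel σ φ g') x z =
      normGaussSum σ φ (g 1 0) / normGaussSum σ φ 1 ^ 2 *
        (normGaussSum σ φ (g' 1 0) / normGaussSum σ φ 1 ^ 2) *
      φ ((g 1 0)⁻¹ʳ * g 0 0 * (σ x * x) + (g' 1 0)⁻¹ʳ * g' 1 1 * (σ z * z)) *
      ∑ y, φ (((g 1 0)⁻¹ʳ * g 1 1 + (g' 1 0)⁻¹ʳ * g' 0 0) * (σ y * y) -
        2 * (σ (σ (g 1 0)⁻¹ʳ * x + (g' 1 0)⁻¹ʳ * z) * y)) := by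
  rw [Matrix.mul_apply, Finset.mul_sum]
  refine Finset.sum_congr rfl fun y _ => ?_
  rw [weilKernel, weilKernel, mul_mul_mul_comm, mul_assoc (_ * _) (φ _), ← AddChar.map_add_eq_mul,
    ← AddChar.map_add_eq_mul]
  congr 1
  refine addChar_eq_of_sub_eq_sub_map hφσ (-2 * ((g' 1 0)⁻¹ʳ * (σ y * z))) ?_
  simp only [map_add, map_mul, map_neg, map_ofNat, hσ _]
  ring

variable [IsLocalRing A]

theorem weilKernel_mul (hσ : Function.Involutive σ)
    (hσres : ∀ a, IsLocalRing.residue A (σ a) = IsLocalRing.residue A a)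
    (hφσ : ∀ a, φ (σ a) = φ a) (hφ : φ.IsPrimitive) (h2 : IsUnit (2 : A))
    (hg : g ∈ SLstarSet σ) (hg' : g' ∈ SLstarSet σ) (hc : IsUnit (g 1 0))
    (hc' : IsUnit (g' 1 0)) (hcc' : IsUnit ((g * g') 1 0)) :
    weilKernel σ φ (g * g') = weilKernel σ φ g * weilKernel σ φ g' := by
  have hi := Ring.mul_inverse_cancel _ hc
  have hi' := Ring.mul_inverse_cancel _ hc'
  have hj := Ring.mul_inverse_cancel _ hcc'
  have ee' := inv_mul_add_inv_mul_mul_eq_one hi hi' hj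
  have e_symm := map_inv_mul_add_inv_mul hg hg' hi hi'
  have e_eq := inv_mul_add_inv_mul_eq hi hi'
  have isUnit_e := IsUnit.of_mul_eq_one _ ee'
  ext x z
  rw [weilKernel_mul_apply hσ hφσ, sum_addChar_quadratic hσ hφσ e_symm ee', weilKernel,
    addChar_weilPhase_mul hσ hφσ hg hg' hi hi' hj]
  generalize (g 1 0)⁻¹ʳ * g 1 1 + (g' 1 0)⁻¹ʳ * g' 0 0 = e at e_eq isUnit_e
  have c_eq : (g * g') 1 0 = g 1 0 * g' 1 0 * e := by
    rw [e_eq]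
    linear_combination -((g * g') 1 0 * (g' 1 0 * (g' 1 0)⁻¹ʳ)) * hi - (g * g') 1 0 * hi'
  have gaussSum_mul := normGaussSum_mul_mul_one hσ hσres hφσ h2 hc hc'
  have gaussSum_mul_mul := normGaussSum_mul_mul_one hσ hσres hφσ h2 (hc.mul hc') isUnit_e
  rw [← c_eq] at gaussSum_mul_mul
  have coeff_eq : normGaussSum σ φ ((g * g') 1 0) / normGaussSum σ φ 1 ^ 2 =
      normGaussSum σ φ (g 1 0) / normGaussSum σ φ 1 ^ 2 *
        (normGaussSum σ φ (g' 1 0) / normGaussSum σ φ 1 ^ 2) * normGaussSum σ φ e := by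
    have := normGaussSum_one_ne_zero hσ hφσ hφ h2
    field_simp
    linear_combination normGaussSum σ φ 1 * gaussSum_mul_mul + normGaussSum σ φ e * gaussSum_mul
  rw [coeff_eq]
  ring

theorem weilKernel_mul_starAdjugate [DecidableEq A] (hσ : Function.Involutive σ)
    (hσres : ∀ a, IsLocalRing.residue A (σ a) = IsLocalRing.residue A a)
    (hφσ : ∀ a, φ (σ a) = φ a) (hφ : φ.IsPrimitive) (h2 : IsUnit (2 : A))
    (hg : g ∈ SLstarSet σ) (hc : IsUnit (g 1 0)) :
    weilKernel σ φ g * weilKernel σ φ (starAdjugate σ g) = 1 := by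
  have hi := Ring.mul_inverse_cancel _ hc
  have inverse_neg_map : (-σ (g 1 0))⁻¹ʳ = -σ (g 1 0)⁻¹ʳ := ringInverse_eq_of_mul_eq_one <| by
    rw [neg_mul_neg, ← map_mul, hi, map_one]
  have quadratic_coeff : (g 1 0)⁻¹ʳ * g 1 1 + -σ (g 1 0)⁻¹ʳ * σ (g 1 1) = 0 := by
    rw [neg_mul, ← map_mul, map_inv_mul_apply_one_one hg hi, add_neg_cancel]
  ext x z
  have linear_coeff : σ (σ (g 1 0)⁻¹ʳ * x + -σ (g 1 0)⁻¹ʳ * z) = 0 ↔ x = z := by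
    rw [map_eq_zero_iff σ hσ.injective, show σ (g 1 0)⁻¹ʳ * x + -σ (g 1 0)⁻¹ʳ * z =
      σ (g 1 0)⁻¹ʳ * (x - z) by ring,
      ((IsUnit.of_mul_eq_one_right _ hi).map σ).mul_right_eq_zero, sub_eq_zero]
  rw [weilKernel_mul_apply hσ hφσ]
  simp only [starAdjugate, Matrix.of_apply, Matrix.cons_val', Matrix.cons_val_zero,
    Matrix.cons_val_one, Matrix.cons_val_fin_one, inverse_neg_map, quadratic_coeff, zero_mul,
    zero_sub, sum_addChar_neg_two_mul hφ h2, linear_coeff, Matrix.one_apply]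
  split_ifs with hxz
  · have phase_eq : (g 1 0)⁻¹ʳ * g 0 0 * (σ x * x) +
        -σ (g 1 0)⁻¹ʳ * σ (g 0 0) * (σ z * z) = 0 := by
      rw [neg_mul, ← map_mul, map_inv_mul_apply_zero_zero hg hi, hxz, neg_mul, add_neg_cancel]
    rw [phase_eq, AddChar.map_zero_eq_one, mul_one, div_mul_div_comm, ← pow_add,
      normGaussSum_mul_neg_map hσ hσres hφσ hφ h2 hc, div_mul_eq_mul_div, ← sq,
      normGaussSum_one_pow_four hσ hσres hφσ hφ h2, div_self]
    exact pow_ne_zero 2 (card_ne_zero_of_isPrimitive hφ)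
  · rw [mul_zero]

end WeilKernel
section Generators

open scoped Ring

variable {A K : Type*} [CommRing A] [Fintype A] [Field K] {σ : A →+* A} {φ : AddChar A K}

theorem weilKernel_wM_apply (σ : A →+* A) (φ : AddChar A K) (x y : A) :
    weilKernel σ φ (wM A) x y =
      normGaussSum σ φ (-1) / normGaussSum σ φ 1 ^ 2 * φ (2 * (σ x * y)) := by
  have inverse_neg_one : (-1 : A)⁻¹ʳ = -1 := ringInverse_eq_of_mul_eq_one (by ring)
  simp [weilKernel, wM, inverse_neg_one]

theorem diagonal_mul_weilKernel_wM [DecidableEq A] (σ : A →+* A) (φ : AddChar A K) (b : A) :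
    Matrix.diagonal (fun x => φ (b * (σ x * x))) * weilKernel σ φ (wM A) =
      weilKernel σ φ (uM b * wM A) := by
  ext x y
  have inverse_neg_one : (-1 : A)⁻¹ʳ = -1 := ringInverse_eq_of_mul_eq_one (by ring)
  rw [Matrix.diagonal_mul, weilKernel_wM_apply, mul_left_comm, ← AddChar.map_add_eq_mul]
  simp [weilKernel, uM, wM, inverse_neg_one, add_comm]

variable [IsLocalRing A]

theorem normGaussSum_neg_inv_map_mul_one (hσ : Function.Involutive σ)
    (hσres : ∀ a, IsLocalRing.residue A (σ a) = IsLocalRing.residue A a)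
    (hφσ : ∀ a, φ (σ a) = φ a) (h2 : IsUnit (2 : A)) (t : Aˣ) :
    normGaussSum σ φ (-↑(Units.map (σ : A →* A) t)⁻¹) * normGaussSum σ φ 1 =
      normGaussSum σ φ t * normGaussSum σ φ (-1) := by
  rw [← normGaussSum_mul_mul_one hσ hσres hφσ h2 t.isUnit isUnit_one.neg,
    ← normGaussSum_mul_norm (t * -1 : A) t⁻¹.isUnit]
  congr 2
  rw [← map_inv, Units.coe_map, MonoidHom.coe_coe]
  linear_combination σ ↑t⁻¹ * t.mul_inv

variable [DecidableEq A]

theorem of_ite_mul_weilKernel_wM (hσ : Function.Involutive σ)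
    (hσres : ∀ a, IsLocalRing.residue A (σ a) = IsLocalRing.residue A a)
    (hφσ : ∀ a, φ (σ a) = φ a) (hφ : φ.IsPrimitive) (h2 : IsUnit (2 : A)) (t : Aˣ) :
    Matrix.of (fun x y : A => if y = x * t then normGaussSum σ φ t / normGaussSum σ φ 1 else 0) *
      weilKernel σ φ (wM A) = weilKernel σ φ (hM (σ : A →* A) t * wM A) := by
  ext x y
  have inverse_neg_inv : (-↑(Units.map (σ : A →* A) t)⁻¹ : A)⁻¹ʳ = -σ t :=
    ringInverse_eq_of_mul_eq_one <| by
      rw [neg_mul_neg]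
      exact (Units.map (σ : A →* A) t).inv_mul
  have gaussSum_eq := (eq_div_iff (normGaussSum_one_ne_zero hσ hφσ hφ h2)).mpr
    (normGaussSum_neg_inv_map_mul_one hσ hσres hφσ h2 t)
  have hM_mul_wM : hM (σ : A →* A) t * wM A =
      !![0, (t : A); -↑(Units.map (σ : A →* A) t)⁻¹, 0] := by
    simp [hM, wM]
  calc _ = normGaussSum σ φ t / normGaussSum σ φ 1 * weilKernel σ φ (wM A) (x * t) y := by
        simp [Matrix.mul_apply]
    _ = weilKernel σ φ !![0, (t : A); -↑(Units.map (σ : A →* A) t)⁻¹, 0] x y := by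
        rw [weilKernel_wM_apply]
        simp only [weilKernel, Matrix.of_apply, Matrix.cons_val', Matrix.cons_val_zero,
          Matrix.cons_val_one, Matrix.cons_val_fin_one, inverse_neg_inv, gaussSum_eq]
        rw [show -σ t * (0 * (σ x * x) + 0 * (σ y * y) - 2 * (σ x * y)) = 2 * (σ (x * t) * y) by
          rw [map_mul]; ring]
        ring
    _ = _ := by rw [hM_mul_wM]

end Generators

section WeilRepresentation

variable {A K : Type*} [CommRing A] [Fintype A] [Field K]
  {σ : A →+* A} {hσ : Function.Involutive σ} {φ : AddChar A K}

theorem exists_monoidHom_eq_weilKernel [IsLocalRing A] [DecidableEq A]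
    (hσ : Function.Involutive σ)
    (hσres : ∀ a, IsLocalRing.residue A (σ a) = IsLocalRing.residue A a)
    (hφσ : ∀ a, φ (σ a) = φ a) (hφ : φ.IsPrimitive) (h2 : IsUnit (2 : A)) :
    ∃ ρ : SLstar σ hσ →* Matrix A A K,
      ∀ g : SLstar σ hσ, IsUnit (g.1 1 0) → ρ g = weilKernel σ φ g := by
  have isMulHomOff_borel : IsMulHomOff (SLstar.borel σ hσ) fun g => weilKernel σ φ g.1 :=
    { map_mul := fun {g g'} hg hg' hgg' =>
        weilKernel_mul hσ hσres hφσ hφ h2 g.2 g'.2 (SLstar.notMem_borel_iff.mp hg)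
          (SLstar.notMem_borel_iff.mp hg') (SLstar.notMem_borel_iff.mp hgg')
      map_mul_map_inv := fun {g} hg =>
        weilKernel_mul_starAdjugate hσ hσres hφσ hφ h2 g.2 (SLstar.notMem_borel_iff.mp hg) }
  obtain ⟨ρ, hρ⟩ := isMulHomOff_borel.exists_monoidHom (SLstar.four_le_card_quotient_borel h2)
  exact ⟨ρ, fun g hg => hρ g (SLstar.notMem_borel_iff.mpr hg)⟩

theorem map_eq_of_mul_weilKernel_wM [DecidableEq A] {ρ : SLstar σ hσ →* Matrix A A K}
    (hρ : ∀ g : SLstar σ hσ, IsUnit (g.1 1 0) → ρ g = weilKernel σ φ g) {g : SLstar σ hσ}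
    (hg : IsUnit (g.1 1 1)) {D : Matrix A A K}
    (hD : D * weilKernel σ φ (wM A) = weilKernel σ φ (g.1 * wM A)) : ρ g = D := by
  let w : SLstar σ hσ := ⟨wM A, wM_mem_SLstarSet σ⟩
  have hw : ρ w = weilKernel σ φ (wM A) := hρ w (by simp [w, wM])
  have hgw : ρ (g * w) = weilKernel σ φ (g.1 * wM A) := hρ (g * w) <| by
    rw [SLstar.coe_mul_apply_one_zero]
    simpa [w, wM] using hg
  rw [← hgw, ← hw, map_mul] at hD
  exact ((Group.isUnit w).map ρ).mul_right_cancel hD.symm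

theorem exists_weilRepresentation [IsLocalRing A] (hσ : Function.Involutive σ)
    (hσres : ∀ a, IsLocalRing.residue A (σ a) = IsLocalRing.residue A a)
    (hφσ : ∀ a, φ (σ a) = φ a) (hφ : φ.IsPrimitive) (h2 : IsUnit (2 : A)) :
    ∃ ρ : SLstar σ hσ →* ((A → K) ≃ₗ[K] (A → K)),
      (∀ (t : Aˣ) (f : A → K) (a : A), ρ ⟨hM (σ : A →* A) t, hM_mem_SLstarSet hσ t⟩ f a =
        normGaussSum σ φ t / normGaussSum σ φ 1 * f (a * t)) ∧
      (∀ (b : A) (hb : σ b = b) (f : A → K) (a : A),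
        ρ ⟨uM b, uM_mem_SLstarSet hb⟩ f a = φ (b * (σ a * a)) * f a) ∧
      (∀ (f : A → K) (a : A), ρ ⟨wM A, wM_mem_SLstarSet σ⟩ f a =
        normGaussSum σ φ (-1) / normGaussSum σ φ 1 / normGaussSum σ φ 1 *
          ∑ c, φ (σ a * c + a * σ c) * f c) := by
  classical
  obtain ⟨ρ, hρ⟩ := exists_monoidHom_eq_weilKernel hσ hσres hφσ hφ h2
  let ρGL : SLstar σ hσ →* ((A → K) ≃ₗ[K] (A → K)) :=
    (LinearMap.GeneralLinearGroup.generalLinearEquiv K (A → K)).toMonoidHom.comp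
      ((Matrix.toLinAlgEquiv' (R := K) (n := A) : Matrix A A K →* _).comp ρ).toHomUnits
  have ρGL_apply (g : SLstar σ hσ) (f : A → K) (a : A) : ρGL g f a = (ρ g).mulVec f a := rfl
  refine ⟨ρGL, fun t f a => ?_, fun b hb f a => ?_, fun f a => ?_⟩
  · rw [ρGL_apply, map_eq_of_mul_weilKernel_wM (g := ⟨_, hM_mem_SLstarSet hσ t⟩) hρ
      (Units.map (σ : A →* A) t)⁻¹.isUnit (of_ite_mul_weilKernel_wM hσ hσres hφσ hφ h2 t)]
    simp [Matrix.mulVec, dotProduct]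
  · rw [ρGL_apply, map_eq_of_mul_weilKernel_wM (g := ⟨_, uM_mem_SLstarSet hb⟩) hρ (by simp [uM])
      (diagonal_mul_weilKernel_wM σ φ b), Matrix.mulVec_diagonal]
  · rw [ρGL_apply, hρ _ (by simp [wM]), Matrix.mulVec, dotProduct, Finset.mul_sum]
    refine Finset.sum_congr rfl fun c _ => ?_
    have phase_eq : φ (2 * (σ a * c)) = φ (σ a * c + a * σ c) :=
      addChar_eq_of_sub_eq_sub_map hφσ (σ a * c) (by rw [map_mul, hσ]; ring)
    rw [weilKernel_wM_apply, phase_eq, div_div, ← sq, mul_assoc]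

end WeilRepresentation

theorem weil_representation_truncPoly_general
    {A K : Type*} [CommRing A] [IsLocalRing A] [Fintype A] [Field K]
    (h2 : IsUnit (2 : A)) (σ : A →+* A) (hσ : Function.Involutive σ)
    (hσres : ∀ a, IsLocalRing.residue A (σ a) = IsLocalRing.residue A a)
    (φ : AddChar A K) (hφ : φ.IsPrimitive) (hφσ : ∀ a, φ (σ a) = φ a) :
    ∃ (hmul : ∀ g ∈ SLstarSet σ, ∀ g' ∈ SLstarSet σ, g * g' ∈ SLstarSet σ)
      (hh : ∀ t : Aˣ, hM (σ : A →* A) t ∈ SLstarSet σ)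
      (hu : ∀ b : A, σ b = b → uM b ∈ SLstarSet σ)
      (hw : wM A ∈ SLstarSet σ),
      ∃ ρ : SLstarSet σ → ((A → K) ≃ₗ[K] (A → K)),
        (∀ g g' : SLstarSet σ, ρ ⟨g.1 * g'.1, hmul g g.2 g' g'.2⟩ = ρ g * ρ g') ∧
        (∀ (t : Aˣ) (f : A → K) (a : A), ρ ⟨hM (σ : A →* A) t, hh t⟩ f a =
          normGaussSum σ φ t / normGaussSum σ φ 1 * f (a * t)) ∧
        (∀ (b : A) (hb : σ b = b) (f : A → K) (a : A),
          ρ ⟨uM b, hu b hb⟩ f a = φ (b * (σ a * a)) * f a) ∧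
        (∀ (f : A → K) (a : A), ρ ⟨wM A, hw⟩ f a =
          normGaussSum σ φ (-1) / normGaussSum σ φ 1 / normGaussSum σ φ 1 *
            ∑ c, φ (σ a * c + a * σ c) * f c) := by
  obtain ⟨ρ, hρ⟩ := exists_weilRepresentation hσ hσres hφσ hφ h2
  exact ⟨fun g hg g' hg' => mul_mem_SLstarSet hσ hg hg', hM_mem_SLstarSet hσ,
    fun b => uM_mem_SLstarSet, wM_mem_SLstarSet σ, ρ, map_mul ρ, hρ⟩

section TruncPoly

variable {k : Type*} [Field k] {m : ℕ} {σ : TruncPoly k m →ₐ[k] TruncPoly k m}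
  {tr : TruncPoly k m →ₗ[k] k}

theorem truncPoly_mk_eq_zero_iff {p : k[X]} :
    (Ideal.Quotient.mk _ p : TruncPoly k m) = 0 ↔ X ^ m ∣ p := by
  rw [Ideal.Quotient.eq_zero_iff_mem, Ideal.mem_span_singleton]

theorem isNilpotent_truncPoly_mk_of_X_dvd {p : k[X]} (hp : X ∣ p) :
    IsNilpotent (Ideal.Quotient.mk _ p : TruncPoly k m) :=
  ⟨m, by rw [← map_pow, truncPoly_mk_eq_zero_iff]; exact pow_dvd_pow_of_dvd hp m⟩

theorem truncPoly_nontrivial (hm : m ≠ 0) : Nontrivial (TruncPoly k m) :=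
  Ideal.Quotient.nontrivial_iff.mpr <| by
    rw [Ne, Ideal.span_singleton_eq_top, isUnit_pow_iff hm]
    exact not_isUnit_X

theorem truncPoly_isUnit_mk_of_coeff_zero_ne_zero {p : k[X]} (hp : p.coeff 0 ≠ 0) :
    IsUnit (Ideal.Quotient.mk _ p : TruncPoly k m) := by
  have isUnit_C : IsUnit (Ideal.Quotient.mk _ (C (p.coeff 0)) : TruncPoly k m) :=
    ((isUnit_C.mpr hp.isUnit).map _)
  have isNilpotent_sub : IsNilpotent (Ideal.Quotient.mk _ (p - C (p.coeff 0)) : TruncPoly k m) :=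
    isNilpotent_truncPoly_mk_of_X_dvd (X_dvd_sub_C)
  simpa using isNilpotent_sub.isUnit_add_left_of_commute isUnit_C (Commute.all _ _)

theorem truncPoly_isLocalRing (hm : m ≠ 0) : IsLocalRing (TruncPoly k m) := by
  have := truncPoly_nontrivial (k := k) hm
  refine .of_isUnit_or_isUnit_one_sub_self fun a => ?_
  obtain ⟨p, rfl⟩ := Ideal.Quotient.mk_surjective a
  rcases eq_or_ne (p.coeff 0) 0 with hp | hp
  · exact .inr (isNilpotent_truncPoly_mk_of_X_dvd (X_dvd_iff.mpr hp)).isUnit_one_sub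
  · exact .inl (truncPoly_isUnit_mk_of_coeff_zero_ne_zero hp)

theorem truncPoly_isUnit_two [Fintype k] (hodd : Odd (Fintype.card k)) :
    IsUnit (2 : TruncPoly k m) := by
  have two_ne_zero : (2 : k) ≠ 0 := Ring.two_ne_zero fun h => by
    simpa [Nat.odd_iff.mp hodd] using FiniteField.even_card_iff_char_two.mp h
  rw [← map_ofNat (algebraMap k (TruncPoly k m))]
  exact two_ne_zero.isUnit.map _

theorem map_truncPoly_mk (hσ : σ (xbar k m) = -xbar k m) (p : k[X]) :
    σ (Ideal.Quotient.mk _ p) = Ideal.Quotient.mk _ (p.comp (-X)) := by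
  have algHom_eq : σ.comp (Ideal.Quotient.mkₐ k _) =
      (Ideal.Quotient.mkₐ k _).comp (aeval (-X)) := by
    ext
    simpa [xbar] using hσ
  exact DFunLike.congr_fun algHom_eq p

theorem involutive_of_map_xbar (hσ : σ (xbar k m) = -xbar k m) : Function.Involutive σ := by
  intro a
  obtain ⟨p, rfl⟩ := Ideal.Quotient.mk_surjective a
  rw [map_truncPoly_mk hσ, map_truncPoly_mk hσ, comp_assoc]
  simp

theorem residue_map_of_map_xbar [IsLocalRing (TruncPoly k m)] (hσ : σ (xbar k m) = -xbar k m)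
    (a : TruncPoly k m) :
    IsLocalRing.residue (TruncPoly k m) (σ a) = IsLocalRing.residue (TruncPoly k m) a := by
  obtain ⟨p, rfl⟩ := Ideal.Quotient.mk_surjective a
  have isNilpotent_sub : IsNilpotent (Ideal.Quotient.mk _ (p.comp (-X) - p) : TruncPoly k m) :=
    isNilpotent_truncPoly_mk_of_X_dvd <| X_dvd_iff.mpr <| by
      simp [coeff_zero_eq_eval_zero]
  rw [← sub_eq_zero, map_truncPoly_mk hσ, ← map_sub, ← map_sub]
  exact (isNilpotent_sub.map _).eq_zero

theorem trace_truncPoly_mk (htr : ∀ i < m, tr (Ideal.Quotient.mk _ (X ^ i)) =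
    if i = m - 1 then 1 else 0) (hm : m ≠ 0) (p : k[X]) :
    tr (Ideal.Quotient.mk _ p) = p.coeff (m - 1) := by
  have linearMap_eq : tr ∘ₗ (Ideal.Quotient.mkₐ k _).toLinearMap = lcoeff k (m - 1) := by
    refine lhom_ext' fun i => LinearMap.ext_ring ?_
    change tr (Ideal.Quotient.mk _ (monomial i 1)) = (monomial i (1 : k)).coeff (m - 1)
    rw [monomial_one_right_eq_X_pow, coeff_X_pow, if_congr eq_comm rfl rfl]
    rcases lt_or_ge i m with hi | hi
    · exact htr i hi
    · rw [truncPoly_mk_eq_zero_iff.mpr (pow_dvd_pow X hi), map_zero, if_neg (by omega)]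
  exact LinearMap.congr_fun linearMap_eq p

theorem trace_map_of_map_xbar (hσ : σ (xbar k m) = -xbar k m)
    (htr : ∀ i < m, tr (Ideal.Quotient.mk _ (X ^ i)) = if i = m - 1 then 1 else 0)
    (hm : Odd m) (a : TruncPoly k m) : tr (σ a) = tr a := by
  obtain ⟨p, rfl⟩ := Ideal.Quotient.mk_surjective a
  have even_sub_one : Even (m - 1) := Nat.Odd.sub_odd hm odd_one
  rw [map_truncPoly_mk hσ, trace_truncPoly_mk htr hm.pos.ne', trace_truncPoly_mk htr hm.pos.ne',
    show (-X : k[X]) = C (-1) * X by simp, comp_C_mul_X_coeff, even_sub_one.neg_one_pow, mul_one]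

theorem isPrimitive_compAddMonoidHom_trace
    (htr : ∀ i < m, tr (Ideal.Quotient.mk _ (X ^ i)) = if i = m - 1 then 1 else 0)
    {R : Type*} [CommMonoid R] {ψ : AddChar k R} (hψ : ψ ≠ 1) :
    (ψ.compAddMonoidHom tr.toAddMonoidHom).IsPrimitive := by
  intro a ha h
  obtain ⟨p, rfl⟩ := Ideal.Quotient.mk_surjective a
  rw [Ne, truncPoly_mk_eq_zero_iff, X_pow_dvd_iff] at ha
  push Not at ha
  obtain ⟨j, hj, hpj⟩ := ha
  obtain ⟨x, hx⟩ := AddChar.ne_one_iff.mp hψ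
  have trace_eq : tr (Ideal.Quotient.mk _ p *
      Ideal.Quotient.mk _ (C (x / p.coeff j) * X ^ (m - 1 - j))) = x := by
    rw [← map_mul, trace_truncPoly_mk htr (by omega), ← mul_assoc, coeff_mul_X_pow',
      if_pos (by omega), coeff_mul_C, show m - 1 - (m - 1 - j) = j by omega,
      mul_div_cancel₀ _ hpj]
  exact hx (trace_eq ▸ DFunLike.congr_fun h _)

end TruncPoly

/-- For `m` odd, the generalized Weil representation of
`SL_*(2,A_m)`: a homomorphism `ρ` into `GL(W)`, `W` the space of complex functions
on `A_m`, acting on the Bruhat generators by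
`(ρ(h(t))f)(a) = α(t) f(at)`, `(ρ(u(b))f)(a) = ψ̲(b Q(a)) f(a)`, and
`(ρ(w)f)(a) = (α(−1)/S(1)) Σ_c ψ̲(B_Q(a,c)) f(c)`, where `α(a) = S(a)/S(1)`. -/
theorem weil_representation_truncPoly
    {k : Type*} [Field k] [Fintype k] (hodd : Odd (Fintype.card k))
    {m : ℕ} (hm : 0 < m) (hmodd : Odd m) [Fintype (TruncPoly k m)]
    (σ : TruncPoly k m →ₐ[k] TruncPoly k m) (hσ : σ (xbar k m) = -xbar k m)
    (tr : TruncPoly k m →ₗ[k] k)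
    (htr : ∀ i < m, tr (Ideal.Quotient.mk _ ((Polynomial.X : Polynomial k) ^ i))
      = if i = m - 1 then 1 else 0)
    (ψ : AddChar k ℂ) (hψ : ∃ x : k, ψ x ≠ 1) :
    ∃ (hmul : ∀ g ∈ SLstarSet (⇑σ), ∀ g' ∈ SLstarSet (⇑σ), g * g' ∈ SLstarSet (⇑σ))
      (hh : ∀ t : (TruncPoly k m)ˣ,
        hM (σ : TruncPoly k m →* TruncPoly k m) t ∈ SLstarSet (⇑σ))
      (hu : ∀ b : TruncPoly k m, σ b = b → uM b ∈ SLstarSet (⇑σ))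
      (hw : wM (TruncPoly k m) ∈ SLstarSet (⇑σ)),
      ∃ ρ : ↥(SLstarSet (⇑σ)) → ((TruncPoly k m → ℂ) ≃ₗ[ℂ] (TruncPoly k m → ℂ)),
        (∀ g g' : ↥(SLstarSet (⇑σ)),
          ρ ⟨(g : Matrix (Fin 2) (Fin 2) (TruncPoly k m)) *
               (g' : Matrix (Fin 2) (Fin 2) (TruncPoly k m)),
             hmul g g.2 g' g'.2⟩ = ρ g * ρ g') ∧
        (∀ (t : (TruncPoly k m)ˣ) (f : TruncPoly k m → ℂ) (a : TruncPoly k m),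
          ρ ⟨hM (σ : TruncPoly k m →* TruncPoly k m) t, hh t⟩ f a
            = (gaussS σ tr ψ (t : TruncPoly k m) / gaussS σ tr ψ 1) * f (a * t)) ∧
        (∀ (b : TruncPoly k m) (hb : σ b = b) (f : TruncPoly k m → ℂ) (a : TruncPoly k m),
          ρ ⟨uM b, hu b hb⟩ f a = ψ (tr (b * (σ a * a))) * f a) ∧
        (∀ (f : TruncPoly k m → ℂ) (a : TruncPoly k m),
          ρ ⟨wM (TruncPoly k m), hw⟩ f a
            = ((gaussS σ tr ψ (-1) / gaussS σ tr ψ 1) / gaussS σ tr ψ 1) *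
                ∑ c : TruncPoly k m, ψ (tr (σ a * c + a * σ c)) * f c) := by
  have := truncPoly_isLocalRing (k := k) hm.ne'
  have hσtr : ∀ a, ψ (tr (σ a)) = ψ (tr a) := fun a => by
    rw [trace_map_of_map_xbar hσ htr hmodd]
  exact weil_representation_truncPoly_general (truncPoly_isUnit_two hodd)
    (σ : TruncPoly k m →+* TruncPoly k m) (involutive_of_map_xbar hσ) (residue_map_of_map_xbar hσ)
    (ψ.compAddMonoidHom tr.toAddMonoidHom)
    (isPrimitive_compAddMonoidHom_trace htr (AddChar.ne_one_iff.mpr hψ)) hσtr
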